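/- arXiv:2001.01308 — 2 statements merged into one kernel-verified Lean document; each statement's English description precedes it below -/
import Mathlib

section
/- Every finite 3-subgroup of PGL₃(ℂ) can be generated by 2 elements. -/
open Matrix

/-- A group `G` can be generated by at most `m` elements. -/
def GeneratedByAtMost (G : Type*) [Group G] (m : ℕ) : Prop :=
  ∃ S : Finset G, S.card ≤ m ∧ Subgroup.closure (S : Set G) = ⊤

/-!
Let `p` be a prime and `G` a finite `p`-subgroup of `PGL_p` over a field of characteristic
different from `p`, which may be assumed algebraically closed. If two elements of `G` commute, their
lifts to `GL_p` commute up to a scalar.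

Suppose first that a central element has a lift `T` that does not commute with some lift `S`, the
lift of `g` say. Then `T S = ξ S T` with `ξ` a primitive `p`-th root of unity, and `T` has distinct
eigenvalues, permuted cyclically by `S`. The elements whose lifts commute with `T` form an abelian
normal subgroup `A` of index `p`, and the elements of `A` commuting with `g` embed into the `p`-th
roots of unity. Hence the endomorphism `x ↦ ⁅g, x⁆` of `A` has kernel and cokernel of order at
most `p`, so `g` and one element of `A` generate `G` modulo its commutator subgroup, which lies in
the Frattini subgroup.

Otherwise `G` is abelian: if `⁅a, x⁆` is central, its lift `Z` acts on each of its eigenspaces by a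
commutator of lifts, and comparing determinants shows that `Z` is scalar. All the lifts then
commute and are simultaneously diagonalizable, with at most `p` weights, whose ratios separate the
points of `G`. Each ratio has cyclic image and so accounts for one generator, `p - 1` in total.
-/

open Subgroup (zpowers centralizer center)
open scoped commutatorElement IsMulCommutative

section GroupTheory

variable {G F : Type*} [Group G] [Field F]

theorem GeneratedByAtMost.mono {m n : ℕ} (h : GeneratedByAtMost G m) (hmn : m ≤ n) :
    GeneratedByAtMost G n := by
  obtain ⟨S, hS, hSG⟩ := h
  exact ⟨S, hS.trans hmn, hSG⟩

theorem GeneratedByAtMost.of_closure_pair {a b : G} (h : Subgroup.closure {a, b} = ⊤) :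
    GeneratedByAtMost G 2 := by
  classical
  exact ⟨{a, b}, Finset.card_le_two, by simpa using h⟩

theorem GeneratedByAtMost.of_zpowers_sup {N : Subgroup G} {m : ℕ} (hN : GeneratedByAtMost N m)
    {a : G} (ha : zpowers a ⊔ N = ⊤) : GeneratedByAtMost G (m + 1) := by
  classical
  obtain ⟨S, hS, hSN⟩ := hN
  have hclosure : Subgroup.closure (N.subtype '' S) = N := by
    rw [← MonoidHom.map_closure, hSN, ← MonoidHom.range_eq_map, Subgroup.range_subtype]
  refine ⟨insert a (S.image N.subtype), (Finset.card_insert_le _ _).trans ?_, ?_⟩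
  · exact Nat.add_le_add_right (Finset.card_image_le.trans hS) 1
  · rw [Finset.coe_insert, Finset.coe_image, Set.insert_eq, Subgroup.closure_union, hclosure,
      ← Subgroup.zpowers_eq_closure, ha]

theorem exists_zpowers_sup_ker_eq_top [Finite G] (f : G →* Fˣ) :
    ∃ a, zpowers a ⊔ f.ker = ⊤ := by
  have : Finite f.range := Set.finite_range f
  obtain ⟨⟨_, a, rfl⟩, ha⟩ := IsCyclic.exists_generator (α := f.range)
  refine ⟨a, top_le_iff.1 fun x _ => ?_⟩
  obtain ⟨k, hk⟩ := Subgroup.mem_zpowers_iff.1 (ha ⟨f x, x, rfl⟩)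
  have hfx : f a ^ k = f x := congrArg Subtype.val hk
  rw [← Subgroup.comap_map_eq, Subgroup.mem_comap, MonoidHom.map_zpowers]
  exact ⟨k, hfx⟩

theorem GeneratedByAtMost.of_characters {ι : Type*} (s : Finset ι) [Finite G]
    (f : ι → G →* Fˣ) (hf : ∀ x, (∀ i ∈ s, f i x = 1) → x = 1) :
    GeneratedByAtMost G s.card := by
  classical
  induction s using Finset.induction_on generalizing G with
  | empty =>
    refine ⟨∅, le_rfl, ?_⟩
    have : Subsingleton G := subsingleton_of_forall_eq 1 fun x => hf x (by simp)
    exact Subsingleton.elim _ _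
  | insert i s hi ih =>
    have hker : GeneratedByAtMost (f i).ker s.card :=
      ih (fun j => (f j).comp (f i).ker.subtype) fun x hx =>
        Subtype.ext (hf x (Finset.forall_mem_insert _ _ _ |>.2 ⟨x.2, hx⟩))
    obtain ⟨a, ha⟩ := exists_zpowers_sup_ker_eq_top (f i)
    exact Finset.card_insert_of_notMem hi ▸ hker.of_zpowers_sup ha

theorem card_range_le_of_pow_eq_one {n : ℕ} [NeZero n] (f : G →* Fˣ) (hf : ∀ x, f x ^ n = 1) :
    Nat.card f.range ≤ n := by
  have hle : f.range ≤ rootsOfUnity n F := by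
    rintro _ ⟨x, rfl⟩
    exact (mem_rootsOfUnity n _).2 (hf x)
  exact (Subgroup.card_le_of_le hle).trans (card_rootsOfUnity F n)

theorem commutator_le_frattini [Group.IsNilpotent G] : commutator G ≤ frattini G := by
  refine le_iInf₂ fun M (hM : IsCoatom M) => ?_
  have : M.Normal :=
    Subgroup.NormalizerCondition.normal_of_coatom M Group.normalizerCondition_of_isNilpotent hM
  have : Nontrivial (G ⧸ M) := QuotientGroup.nontrivial_iff.2 hM.1
  by_contra hle
  have hsup : commutator G ⊔ M = ⊤ := hM.2 _ (right_lt_sup.2 hle)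
  refine (Group.IsSolvable.commutator_lt_top_of_nontrivial (G ⧸ M)).ne ?_
  have hmap := map_commutator_eq G (QuotientGroup.mk' M)
  rw [MonoidHom.range_eq_top.2 (QuotientGroup.mk'_surjective M)] at hmap
  rw [commutator_def, ← hmap, ← Subgroup.map_top_of_surjective _ (QuotientGroup.mk'_surjective M),
    Subgroup.map_eq_map_iff, QuotientGroup.ker_mk', hsup, top_sup_eq]

theorem eq_top_of_sup_commutator_eq_top [Finite G] [Group.IsNilpotent G] {K : Subgroup G}
    (hK : K ⊔ commutator G = ⊤) : K = ⊤ :=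
  frattini_nongenerating (top_le_iff.1 (hK ▸ sup_le_sup_left commutator_le_frattini K))

theorem center_eq_top_of_commutatorElement_mem_center [Group.IsNilpotent G]
    (h : ∀ a x : G, ⁅a, x⁆ ∈ center G → ⁅a, x⁆ = 1) : center G = ⊤ := by
  obtain ⟨n, hn⟩ := Group.IsNilpotent.nilpotent G
  have hle (m : ℕ) : Subgroup.upperCentralSeries G m ≤ center G := by
    induction m with
    | zero => exact bot_le
    | succ m ih =>
      refine fun a ha => Subgroup.mem_center_iff.2 fun x => Eq.symm ?_
      exact commutatorElement_eq_one_iff_mul_comm.1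
        (h a x (ih (Subgroup.mem_upperCentralSeries_succ_iff.1 ha x)))
  exact top_le_iff.1 (hn ▸ hle n)

section PGroup

variable {p : ℕ} [Fact p.Prime]

theorem zpowers_sup_eq_top_of_index_le (hG : IsPGroup p G) {N : Subgroup G} [N.FiniteIndex]
    (hN : N.index ≤ p) {a : G} (ha : a ∉ N) : zpowers a ⊔ N = ⊤ := by
  have hlt : N < zpowers a ⊔ N := right_lt_sup.2 fun h => ha (h (Subgroup.mem_zpowers a))
  have := Subgroup.finiteIndex_of_le hlt.le
  obtain ⟨k, hk⟩ := hG.index (zpowers a ⊔ N)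
  have hk1 : p ^ k < p ^ 1 := by
    rw [← hk, pow_one]
    exact (Subgroup.index_strictAnti hlt).trans_le hN
  obtain rfl : k = 0 :=
    Nat.lt_one_iff.1 ((Nat.pow_lt_pow_iff_right (Fact.out : p.Prime).one_lt).1 hk1)
  rwa [pow_zero, Subgroup.index_eq_one] at hk

theorem exists_le_zpowers_sup_commutator [Finite G] (hG : IsPGroup p G) (A : Subgroup G)
    [A.Normal] [IsMulCommutative A] (g : G) (hA : Nat.card (A ⊓ centralizer {g} : Subgroup G) ≤ p) :
    ∃ a, A ≤ zpowers a ⊔ commutator G := by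
  let φ : A →* A := (MulAut.conjNormal g : MulAut A).toMonoidHom / MonoidHom.id A
  have hφ (x : A) : (φ x : G) = ⁅g, (x : G)⁆ := by
    simp [φ, div_eq_mul_inv, commutatorElement_def]
  have hrange : φ.range.map A.subtype ≤ commutator G := by
    rintro _ ⟨_, ⟨x, rfl⟩, rfl⟩
    rw [Subgroup.subtype_apply, hφ]
    exact Subgroup.commutator_mem_commutator (Subgroup.mem_top g) (Subgroup.mem_top (x : G))
  have hker : φ.ker.map A.subtype ≤ A ⊓ centralizer {g} := by
    rintro _ ⟨x, hx, rfl⟩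
    have hgx : ⁅g, (x : G)⁆ = 1 := hφ x ▸ congrArg Subtype.val hx
    exact ⟨x.2, Subgroup.mem_centralizer_singleton_iff.2
      (commutatorElement_eq_one_iff_mul_comm.1 hgx).symm⟩
  have hindex : φ.range.index ≤ p := by
    rw [Subgroup.index_range, ← Subgroup.card_map_of_injective A.subtype_injective]
    exact (Subgroup.card_le_of_le hker).trans hA
  obtain ⟨a, ha⟩ : ∃ a, zpowers a ⊔ φ.range = ⊤ := by
    by_cases h : φ.range = ⊤
    · exact ⟨1, by rw [h, sup_top_eq]⟩
    · obtain ⟨a, ha⟩ := SetLike.exists_not_mem_of_ne_top _ h rfl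
      exact ⟨a, zpowers_sup_eq_top_of_index_le (hG.to_subgroup A) hindex ha⟩
  refine ⟨a, ?_⟩
  calc A = (zpowers a ⊔ φ.range).map A.subtype := by
        rw [ha, ← MonoidHom.range_eq_map, Subgroup.range_subtype]
    _ ≤ zpowers (a : G) ⊔ commutator G := by
        rw [Subgroup.map_sup, MonoidHom.map_zpowers]
        exact sup_le_sup_left hrange _

theorem generatedByAtMost_two_of_card_inf_centralizer_le [Finite G] (hG : IsPGroup p G)
    (A : Subgroup G) [A.Normal] [IsMulCommutative A] {g : G} (hgA : zpowers g ⊔ A = ⊤)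
    (hA : Nat.card (A ⊓ centralizer {g} : Subgroup G) ≤ p) : GeneratedByAtMost G 2 := by
  have := hG.isNilpotent
  obtain ⟨a, ha⟩ := exists_le_zpowers_sup_commutator hG A g hA
  refine .of_closure_pair (a := g) (b := a) (eq_top_of_sup_commutator_eq_top (top_le_iff.1 ?_))
  calc ⊤ = zpowers g ⊔ A := hgA.symm
    _ ≤ zpowers g ⊔ (zpowers a ⊔ commutator G) := sup_le_sup_left ha _
    _ = Subgroup.closure {g, a} ⊔ commutator G := by
        rw [← sup_assoc, Subgroup.zpowers_eq_closure, Subgroup.zpowers_eq_closure,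
          ← Subgroup.closure_union, Set.insert_eq]

end PGroup

end GroupTheory

section LinearAlgebra

open Module

variable {K V : Type*} [Field K] [AddCommGroup V] [Module K V]

section EigenBasis

variable {ι : Type*} {b : Basis ι K V} {μ : ι → K} {T X Y : End K V}

theorem exists_apply_eq_smul_of_commute (hμ : Function.Injective μ)
    (hT : ∀ i, T (b i) = μ i • b i) (hX : Commute X T) (i : ι) : ∃ r : K, X (b i) = r • b i := by
  have hcoord (j : ι) (w : V) : b.coord j (T w) = μ j * b.coord j w := by
    suffices h : b.coord j ∘ₗ T = μ j • b.coord j from LinearMap.congr_fun h w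
    refine b.ext fun k => ?_
    obtain rfl | hk := eq_or_ne k j
    · simp [hT]
    · simp [hT, hk]
  have hTX : T (X (b i)) = μ i • X (b i) := by
    rw [← map_smul, ← hT]
    exact (LinearMap.congr_fun hX (b i)).symm
  refine ⟨b.coord i (X (b i)), b.ext_elem fun j => ?_⟩
  obtain rfl | hj := eq_or_ne j i
  · simp
  · have hzero : b.coord j (X (b i)) = 0 := by
      by_contra h
      refine hj (hμ (mul_right_cancel₀ h ?_))
      rw [← hcoord, hTX, map_smul, smul_eq_mul]
    simpa [hj.symm] using hzero

theorem commute_of_commute_of_eigenbasis (hμ : Function.Injective μ)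
    (hT : ∀ i, T (b i) = μ i • b i) (hX : Commute X T) (hY : Commute Y T) : Commute X Y := by
  refine b.ext fun i => ?_
  obtain ⟨r, hr⟩ := exists_apply_eq_smul_of_commute hμ hT hX i
  obtain ⟨s, hs⟩ := exists_apply_eq_smul_of_commute hμ hT hY i
  simp [hr, hs, smul_comm r s]

end EigenBasis

theorem mul_pow_eq_smul_pow_mul {A : Type*} [Ring A] [Algebra K A] {S T : A} {ξ : K}
    (h : T * S = ξ • (S * T)) (n : ℕ) : T * S ^ n = ξ ^ n • (S ^ n * T) := by
  have hsemiconj : SemiconjBy T S (ξ • S) := by rw [SemiconjBy, h, smul_mul_assoc]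
  rw [(hsemiconj.pow_right n).eq, smul_pow, smul_mul_assoc]

theorem isFinitelySemisimple_of_pow_eq_smul_one {T : End K V} {n : ℕ} {c : K} (hn : (n : K) ≠ 0)
    (hc : c ≠ 0) (h : T ^ n = c • 1) : T.IsFinitelySemisimple := by
  have hsq : Squarefree (Polynomial.X ^ n - Polynomial.C c) :=
    (Polynomial.separable_X_pow_sub_C c hn hc).squarefree
  refine (End.isSemisimple_of_squarefree_aeval_eq_zero hsq ?_).isFinitelySemisimple
  simp [h, Algebra.algebraMap_eq_smul_one]

section FiniteDimensional

variable [FiniteDimensional K V] {S T X Z : End K V} {ξ : K}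

theorem pow_finrank_eq_one_of_mul_eq_smul_mul (hS : Function.Injective S)
    (hT : Function.Injective T) (h : T * S = ξ • (S * T)) : ξ ^ finrank K V = 1 := by
  have hST : LinearMap.det (S * T) ≠ 0 := fun h0 =>
    (LinearMap.bot_lt_ker_of_det_eq_zero h0).ne' (LinearMap.ker_eq_bot.2 (hS.comp hT))
  refine mul_right_cancel₀ hST ?_
  rw [← LinearMap.det_smul, ← h, one_mul, map_mul, map_mul, mul_comm]

theorem eq_one_of_mul_eq_smul_mul_of_coprime [Nontrivial V] (hS : Function.Injective S)
    (hT : Function.Injective T) (h : T * S = ξ • (S * T)) {n : ℕ} {c : K} (hSn : S ^ n = c • 1)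
    (hn : (finrank K V).Coprime n) : ξ = 1 := by
  have hST : S ^ n * T ≠ 0 := fun h0 => by
    obtain ⟨v, hv⟩ := exists_ne (0 : V)
    have hinj : Function.Injective (S ^ n * T) := by
      rw [End.mul_eq_comp, LinearMap.coe_comp, End.coe_pow]
      exact (hS.iterate n).comp hT
    exact hv (hinj (by simp [h0]))
  have hpow : ξ ^ n = 1 := by
    refine smul_left_injective K hST ?_
    change ξ ^ n • (S ^ n * T) = (1 : K) • (S ^ n * T)
    rw [← mul_pow_eq_smul_pow_mul h, one_smul, hSn, mul_smul_one, smul_one_mul]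
  simpa [hn.gcd_eq_one] using
    pow_gcd_eq_one.2 ⟨pow_finrank_eq_one_of_mul_eq_smul_mul hS hT h, hpow⟩

theorem eq_one_of_hasEigenvalue_of_mul_eq_mul_mul {p : ℕ} (hp : p.Prime) (hV : finrank K V = p)
    (hS : Function.Injective S) (hT : Function.Injective T) (hZS : Commute Z S)
    (hZT : Commute Z T) (h : T * S = Z * (S * T)) {m : ℕ} {c : K} (hSm : S ^ p ^ m = c • 1)
    {μ : K} (hμ : Z.HasEigenvalue μ) (hZμ : Z ≠ μ • 1) : μ = 1 := by
  -- `S` and `T` restrict to `E`, whose dimension is prime to `p`, with commutator `μ`.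
  let E := Z.eigenspace μ
  have hES : ∀ v ∈ E, S v ∈ E := End.mapsTo_genEigenspace_of_comm hZS μ 1
  have hET : ∀ v ∈ E, T v ∈ E := End.mapsTo_genEigenspace_of_comm hZT μ 1
  have : Nontrivial E := Submodule.nontrivial_iff_ne_bot.2 hμ
  have hlt : finrank K E < p := by
    refine hV ▸ Submodule.finrank_lt (lt_top_iff_ne_top.2 fun hE => hZμ ?_).ne
    ext v
    exact End.mem_eigenspace_iff.1 (hE ▸ Submodule.mem_top : v ∈ E)
  have hinj {R : End K V} (hR : Function.Injective R) (hRE : ∀ v ∈ E, R v ∈ E) :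
      Function.Injective (R.restrict hRE) := fun u v huv =>
    Subtype.ext (hR (congrArg Subtype.val huv))
  refine eq_one_of_mul_eq_smul_mul_of_coprime (n := p ^ m) (c := c) (hinj hS hES) (hinj hT hET)
    ?_ ?_ ?_
  · ext v
    have hv := LinearMap.congr_fun h v
    exact hv.trans (End.mem_eigenspace_iff.1 (hES _ (hET _ v.2)))
  · rw [End.pow_restrict]
    ext v
    exact LinearMap.congr_fun hSm v
  · exact (Nat.coprime_of_lt_prime finrank_pos.ne' hlt hp).symm.pow_right m

variable [IsAlgClosed K]

theorem eq_smul_one_of_forall_hasEigenvalue (hT : T.IsFinitelySemisimple) {c : K}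
    (h : ∀ μ, T.HasEigenvalue μ → μ = c) : T = c • 1 := by
  have htop : T.eigenspace c = ⊤ := by
    rw [eq_top_iff, ← End.iSup_maxGenEigenspace_eq_top T]
    refine iSup_le fun μ => ?_
    rw [hT.maxGenEigenspace_eq_eigenspace]
    by_cases hμ : T.HasEigenvalue μ
    · rw [h μ hμ]
    · rw [not_not.1 (End.hasEigenvalue_iff.not.1 hμ)]
      exact bot_le
  ext v
  exact End.mem_eigenspace_iff.1 (htop ▸ Submodule.mem_top : v ∈ T.eigenspace c)

theorem exists_eq_smul_one_of_mul_eq_mul_mul {p : ℕ} (hp : p.Prime) (hV : finrank K V = p)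
    (hS : Function.Injective S) (hT : Function.Injective T) (hZS : Commute Z S)
    (hZT : Commute Z T) (h : T * S = Z * (S * T)) {m : ℕ} {c : K} (hSm : S ^ p ^ m = c • 1)
    (hZ : Z.IsFinitelySemisimple) : ∃ r : K, Z = r • 1 := by
  by_contra! hscalar
  exact hscalar 1 (eq_smul_one_of_forall_hasEigenvalue hZ fun μ hμ =>
    eq_one_of_hasEigenvalue_of_mul_eq_mul_mul hp hV hS hT hZS hZT h hSm hμ (hscalar μ))

theorem exists_cyclic_eigenbasis [Nontrivial V] (hξ : IsPrimitiveRoot ξ (finrank K V))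
    (hS : Function.Injective S) (hT : Function.Injective T) (h : T * S = ξ • (S * T)) :
    ∃ (v : V) (μ : Fin (finrank K V) → K) (b : Basis (Fin (finrank K V)) K V),
      Function.Injective μ ∧ (∀ i, b i = (S ^ (i : ℕ)) v) ∧ ∀ i, T (b i) = μ i • b i := by
  obtain ⟨l, hl⟩ := End.exists_eigenvalue T
  obtain ⟨v, hv⟩ := hl.exists_hasEigenvector
  have hTv : T v = l • v := hv.apply_eq_smul
  have hl0 : l ≠ 0 := by
    rintro rfl
    exact hv.2 (hT (by rw [hTv, zero_smul, map_zero]))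
  let μ (i : Fin (finrank K V)) : K := ξ ^ (i : ℕ) * l
  have hμ : Function.Injective μ := fun i j hij =>
    Fin.ext (hξ.pow_inj i.2 j.2 (mul_right_cancel₀ hl0 hij))
  have hTS (n : ℕ) : T ((S ^ n) v) = (ξ ^ n * l) • (S ^ n) v :=
    calc T ((S ^ n) v) = ξ ^ n • (S ^ n) (T v) :=
          LinearMap.congr_fun (mul_pow_eq_smul_pow_mul h n) v
      _ = (ξ ^ n * l) • (S ^ n) v := by rw [hTv, map_smul, smul_smul]
  have hSv (n : ℕ) : (S ^ n) v ≠ 0 := fun h0 =>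
    hv.2 ((End.coe_pow S n ▸ hS.iterate n) (h0.trans (map_zero _).symm))
  have hli : LinearIndependent K fun i : Fin (finrank K V) => (S ^ (i : ℕ)) v :=
    End.eigenvectors_linearIndependent' T μ hμ _ fun i =>
      End.hasEigenvector_iff.2 ⟨End.mem_eigenspace_iff.2 (hTS i), hSv i⟩
  have : Nonempty (Fin (finrank K V)) := ⟨⟨0, finrank_pos⟩⟩
  refine ⟨v, μ, basisOfLinearIndependentOfCardEqFinrank hli (by simp), hμ, ?_, ?_⟩
  · simp
  · simp [hTS, μ]

theorem commute_of_commute_of_mul_eq_smul_mul [Nontrivial V] {Y : End K V}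
    (hξ : IsPrimitiveRoot ξ (finrank K V)) (hS : Function.Injective S)
    (hT : Function.Injective T) (h : T * S = ξ • (S * T)) (hX : Commute X T)
    (hY : Commute Y T) : Commute X Y := by
  obtain ⟨-, μ, b, hμ, -, hb⟩ := exists_cyclic_eigenbasis hξ hS hT h
  exact commute_of_commute_of_eigenbasis hμ hb hX hY

theorem exists_eq_smul_one_of_commute_of_mul_eq_smul_mul [Nontrivial V]
    (hξ : IsPrimitiveRoot ξ (finrank K V)) (hS : Function.Injective S)
    (hT : Function.Injective T) (h : T * S = ξ • (S * T)) (hXS : Commute X S)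
    (hXT : Commute X T) : ∃ r : K, X = r • 1 := by
  obtain ⟨v, μ, b, hμ, hbS, hbT⟩ := exists_cyclic_eigenbasis hξ hS hT h
  obtain ⟨r, hr⟩ := exists_apply_eq_smul_of_commute hμ hbT hXT ⟨0, finrank_pos⟩
  have hrv : X v = r • v := by simpa [hbS] using hr
  refine ⟨r, b.ext fun i => ?_⟩
  calc X (b i) = (S ^ (i : ℕ)) (X v) := by
        rw [hbS]
        exact LinearMap.congr_fun (hXS.pow_right i) v
    _ = (r • (1 : End K V)) (b i) := by
        rw [hrv, map_smul, hbS, LinearMap.smul_apply, End.one_apply]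

end FiniteDimensional

end LinearAlgebra

section ProjectiveRepresentation

open Module

variable {K V H G : Type*} [Field K] [AddCommGroup V] [Module K V] [Group H] [Group G]

/-- The homomorphism `π` identifies `G` with the image of the representation `ρ` in `PGL(V)`:
it is surjective and its kernel consists of the elements acting as scalars. This replaces the
quotient `PGL(V)` itself, so that one can compute with the operators `ρ x`. -/
structure IsProjectiveImage (ρ : Representation K H V) (π : H →* G) : Prop where
  surjective : Function.Surjective π
  eq_one_iff (x : H) : π x = 1 ↔ ∃ c : K, ρ x = c • 1

variable {ρ : Representation K H V} {π : H →* G}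

theorem representation_apply_ne_zero [Nontrivial V] (ρ : Representation K H V) (x : H) :
    ρ x ≠ 0 := fun h0 => by
  obtain ⟨v, hv⟩ := exists_ne (0 : V)
  exact hv ((ρ.apply_bijective x).1 (by simp [h0]))

namespace IsProjectiveImage

theorem subgroupComap (hπ : IsProjectiveImage ρ π) (N : Subgroup G) :
    IsProjectiveImage (ρ.comp (N.comap π).subtype) (π.subgroupComap N) where
  surjective := π.subgroupComap_surjective_of_surjective N hπ.surjective
  eq_one_iff x := Subtype.ext_iff.trans (hπ.eq_one_iff x)

theorem eq_iff_exists_eq_smul (hπ : IsProjectiveImage ρ π) {x y : H} :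
    π x = π y ↔ ∃ c : K, ρ x = c • ρ y := by
  rw [eq_comm, ← inv_mul_eq_one, ← map_inv, ← map_mul, hπ.eq_one_iff]
  refine exists_congr fun c => ⟨fun h => ?_, fun h => ?_⟩
  · calc ρ x = ρ y * ρ (y⁻¹ * x) := by rw [← map_mul, mul_inv_cancel_left]
      _ = c • ρ y := by rw [h, mul_smul_comm, mul_one]
  · rw [map_mul, h, mul_smul_comm, ← map_mul, inv_mul_cancel, map_one]

theorem commute_iff_exists_mul_eq_smul_mul (hπ : IsProjectiveImage ρ π) {x y : H} :
    Commute (π x) (π y) ↔ ∃ c : K, ρ x * ρ y = c • (ρ y * ρ x) := by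
  simpa only [map_mul, commute_iff_eq] using hπ.eq_iff_exists_eq_smul (x := x * y) (y := y * x)

section CommutatorCharacter

theorem commutator_character_pow_finrank [FiniteDimensional K V] {L : Type*} [Group L]
    (hπ : IsProjectiveImage ρ π) {y : H} {f : L →* G} {χ : L →* Kˣ}
    (hχ : ∀ l x, π x = f l → ρ y * ρ x = (χ l : K) • (ρ x * ρ y)) (l : L) :
    χ l ^ finrank K V = 1 := by
  obtain ⟨x, hx⟩ := hπ.surjective (f l)
  exact Units.ext (pow_finrank_eq_one_of_mul_eq_smul_mul (ρ.apply_bijective x).1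
    (ρ.apply_bijective y).1 (hχ l x hx))

variable [Nontrivial V]

theorem exists_pow_eq_smul_one (hπ : IsProjectiveImage ρ π) {x : H} {n : ℕ} (hn : π x ^ n = 1) :
    ∃ c : K, c ≠ 0 ∧ ρ x ^ n = c • 1 := by
  obtain ⟨c, hc⟩ := (hπ.eq_one_iff (x ^ n)).1 (by rw [map_pow, hn])
  refine ⟨c, ?_, by rw [← map_pow, hc]⟩
  rintro rfl
  exact representation_apply_ne_zero ρ (x ^ n) (by rw [hc, zero_smul])

theorem isFinitelySemisimple {p : ℕ} [NeZero (p : K)] (hG : IsPGroup p G)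
    (hπ : IsProjectiveImage ρ π) (x : H) : End.IsFinitelySemisimple (ρ x) := by
  obtain ⟨m, hm⟩ := hG (π x)
  obtain ⟨c, hc, hxc⟩ := hπ.exists_pow_eq_smul_one hm
  refine isFinitelySemisimple_of_pow_eq_smul_one ?_ hc hxc
  exact Nat.cast_pow (α := K) p m ▸ pow_ne_zero m (NeZero.ne _)

theorem exists_commutator_character {L : Type*} [Group L] (hπ : IsProjectiveImage ρ π) (y : H)
    (f : L →* G) (hf : ∀ l, Commute (π y) (f l)) :
    ∃ χ : L →* Kˣ, ∀ l x, π x = f l → ρ y * ρ x = (χ l : K) • (ρ x * ρ y) := by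
  have hscalar (l : L) : ∃ c : K, ∀ x, π x = f l → ρ y * ρ x = c • (ρ x * ρ y) := by
    obtain ⟨x₀, hx₀⟩ := hπ.surjective (f l)
    obtain ⟨c, hc⟩ := hπ.commute_iff_exists_mul_eq_smul_mul.1 (hx₀ ▸ hf l)
    refine ⟨c, fun x hx => ?_⟩
    obtain ⟨d, hd⟩ := hπ.eq_iff_exists_eq_smul.1 (hx.trans hx₀.symm)
    rw [hd, mul_smul_comm, hc, smul_mul_assoc, smul_comm]
  choose χ hχ using hscalar
  have hunique {x : H} {l : L} (hx : π x = f l) {c : K} (hc : ρ y * ρ x = c • (ρ x * ρ y)) :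
      χ l = c := by
    have hxy : ρ x * ρ y ≠ 0 := map_mul ρ x y ▸ representation_apply_ne_zero ρ (x * y)
    exact smul_left_injective K hxy ((hχ l x hx).symm.trans hc)
  have hone : χ 1 = 1 := hunique (x := 1) (by simp) (by simp)
  have hmul (l m : L) : χ (l * m) = χ l * χ m := by
    obtain ⟨x, hx⟩ := hπ.surjective (f l)
    obtain ⟨z, hz⟩ := hπ.surjective (f m)
    refine hunique (x := x * z) (by rw [map_mul, map_mul, hx, hz]) ?_
    rw [map_mul, ← mul_assoc, hχ l x hx, smul_mul_assoc, mul_assoc, hχ m z hz, mul_smul_comm,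
      smul_smul, mul_assoc]
  let χ' : L →* K := { toFun := χ, map_one' := hone, map_mul' := hmul }
  exact ⟨χ'.toHomUnits, hχ⟩

theorem card_le_finrank_of_le_centralizer [FiniteDimensional K V] (hπ : IsProjectiveImage ρ π)
    {g : H} {A : Subgroup G} (hA : A ≤ centralizer {π g})
    (h : ∀ x, π x ∈ A → Commute (ρ x) (ρ g) → π x = 1) :
    Nat.card A ≤ finrank K V := by
  obtain ⟨ψ, hψ⟩ := hπ.exists_commutator_character g A.subtype fun a =>
    (Subgroup.mem_centralizer_singleton_iff.1 (hA a.2)).symm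
  have hinj : Function.Injective ψ := (injective_iff_map_eq_one ψ).2 fun a ha => by
    obtain ⟨x, hx⟩ := hπ.surjective a
    have hgx : ρ g * ρ x = ρ x * ρ g := by simpa [ha] using hψ a x hx
    exact Subtype.ext (hx.symm.trans (h x (hx ▸ a.2) hgx.symm))
  have : NeZero (finrank K V) := ⟨finrank_pos.ne'⟩
  rw [Nat.card_congr (MonoidHom.ofInjective hinj).toEquiv]
  exact card_range_le_of_pow_eq_one ψ (hπ.commutator_character_pow_finrank hψ)

end CommutatorCharacter

section PGroup

variable {p : ℕ} [Fact p.Prime] [FiniteDimensional K V]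

theorem generatedByAtMost_two_of_not_commute [IsAlgClosed K] [Finite G] (hG : IsPGroup p G)
    (hV : finrank K V = p) (hπ : IsProjectiveImage ρ π) {h g : H} (hh : π h ∈ center G)
    (hgh : ¬ Commute (ρ h) (ρ g)) : GeneratedByAtMost G 2 := by
  have : Nontrivial V := nontrivial_of_finrank_pos (hV ▸ (Fact.out : p.Prime).pos)
  obtain ⟨χ, hχ⟩ := hπ.exists_commutator_character h (MonoidHom.id G)
    fun x => (Subgroup.mem_center_iff.1 hh x).symm
  have hpow (x : G) : χ x ^ p = 1 := hV ▸ hπ.commutator_character_pow_finrank hχ x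
  have hker {x : H} (hx : π x ∈ χ.ker) : Commute (ρ x) (ρ h) :=
    (commute_iff_eq _ _).2 (by simpa [MonoidHom.mem_ker.1 hx] using (hχ _ x rfl).symm)
  have hg : π g ∉ χ.ker := fun hg => hgh (hker hg).symm
  have hξ : IsPrimitiveRoot (χ (π g) : K) (finrank K V) := by
    rw [IsPrimitiveRoot.coe_units_iff, hV]
    exact orderOf_eq_prime (hpow _) hg ▸ IsPrimitiveRoot.orderOf _
  have hχg := hχ _ g rfl
  have : IsMulCommutative χ.ker := ⟨⟨fun ⟨a, ha⟩ ⟨b, hb⟩ => by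
    obtain ⟨x, rfl⟩ := hπ.surjective a
    obtain ⟨y, rfl⟩ := hπ.surjective b
    refine Subtype.ext (hπ.commute_iff_exists_mul_eq_smul_mul.2 ⟨1, ?_⟩)
    rw [one_smul]
    exact commute_of_commute_of_mul_eq_smul_mul hξ (ρ.apply_bijective g).1 (ρ.apply_bijective h).1
      hχg (hker ha) (hker hb)⟩⟩
  have hindex : χ.ker.index ≤ p := by
    rw [Subgroup.index_ker]
    exact card_range_le_of_pow_eq_one χ hpow
  refine generatedByAtMost_two_of_card_inf_centralizer_le hG χ.ker
    (zpowers_sup_eq_top_of_index_le hG hindex hg) ?_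
  refine hV ▸ hπ.card_le_finrank_of_le_centralizer inf_le_right fun x hx hxg => ?_
  exact (hπ.eq_one_iff x).2 (exists_eq_smul_one_of_commute_of_mul_eq_smul_mul hξ
    (ρ.apply_bijective g).1 (ρ.apply_bijective h).1 hχg hxg (hker hx.1))

theorem commute_of_forall_mem_center [NeZero (p : K)] [IsAlgClosed K] [Finite G]
    (hG : IsPGroup p G) (hV : finrank K V = p) (hπ : IsProjectiveImage ρ π)
    (hcenter : ∀ z, π z ∈ center G → ∀ x, Commute (ρ z) (ρ x)) (x y : H) :
    Commute (ρ x) (ρ y) := by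
  have hp : p.Prime := Fact.out
  have : Nontrivial V := nontrivial_of_finrank_pos (hV ▸ hp.pos)
  have := hG.isNilpotent
  suffices hG' : center G = ⊤ from hcenter x (hG' ▸ Subgroup.mem_top _) y
  refine center_eq_top_of_commutatorElement_mem_center fun a b hab => ?_
  obtain ⟨a, rfl⟩ := hπ.surjective a
  obtain ⟨b, rfl⟩ := hπ.surjective b
  rw [← map_commutatorElement] at hab ⊢
  have hρ : ρ a * ρ b = ρ ⁅a, b⁆ * (ρ b * ρ a) := by
    simp only [← map_mul, commutatorElement_def]
    group
  obtain ⟨m, hm⟩ := hG (π b)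
  obtain ⟨c, -, hc⟩ := hπ.exists_pow_eq_smul_one hm
  exact (hπ.eq_one_iff _).2 (exists_eq_smul_one_of_mul_eq_mul_mul hp hV (ρ.apply_bijective b).1
    (ρ.apply_bijective a).1 (hcenter _ hab b) (hcenter _ hab a) hρ hc
    (hπ.isFinitelySemisimple hG _))

end PGroup

end IsProjectiveImage

section WeightSpace

/-- The simultaneous eigenspace of a representation on which each `x` acts by the scalar `χ x`,
used to diagonalize commuting operators. A scalar by which a group element acts on a nonzero vector
is invertible, so `χ` takes values in `Kˣ`. -/
def weightSpace (ρ : Representation K H V) (χ : H →* Kˣ) : Submodule K V :=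
  ⨅ x, End.eigenspace (ρ x) (χ x : K)

theorem mem_weightSpace {χ : H →* Kˣ} {v : V} :
    v ∈ weightSpace ρ χ ↔ ∀ x, ρ x v = (χ x : K) • v := by
  simp only [weightSpace, Submodule.mem_iInf, End.mem_eigenspace_iff]

theorem weight_apply_eq_of_eq_smul_one {χ : H →* Kˣ} (hχ : weightSpace ρ χ ≠ ⊥) {x : H} {c : K}
    (hx : ρ x = c • 1) : (χ x : K) = c := by
  obtain ⟨v, hv, hv0⟩ := Submodule.exists_mem_ne_zero_of_ne_bot hχ
  refine smul_left_injective K hv0 ?_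
  simpa [hx] using (mem_weightSpace.1 hv x).symm

theorem iSupIndep_weightSpace (hρ : ∀ x y, Commute (ρ x) (ρ y)) : iSupIndep (weightSpace ρ) := by
  have hind := End.independent_iInf_maxGenEigenspace_of_forall_mapsTo (fun x => ρ x)
    fun x y μ => End.mapsTo_maxGenEigenspace_of_comm (hρ y x) μ
  have hinj : Function.Injective fun (χ : H →* Kˣ) x => (χ x : K) := fun χ χ' h =>
    MonoidHom.ext fun x => Units.ext (congrFun h x)
  exact (hind.comp hinj).mono fun χ => iInf_mono fun x => End.genEigenspace_le_maximal (ρ x) _ 1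

theorem exists_weightSpace_eq_iInf_eigenspace {μ : H → K}
    (hμ : ⨅ x, End.eigenspace (ρ x) (μ x) ≠ ⊥) :
    ∃ χ, weightSpace ρ χ = ⨅ x, End.eigenspace (ρ x) (μ x) := by
  obtain ⟨v, hv, hv0⟩ := Submodule.exists_mem_ne_zero_of_ne_bot hμ
  have hρv (x : H) : ρ x v = μ x • v := End.mem_eigenspace_iff.1 ((Submodule.mem_iInf _).1 hv x)
  let χ : H →* K :=
    { toFun := μ
      map_one' := smul_left_injective K hv0 (by simp [← hρv])
      map_mul' x y := smul_left_injective K hv0 (by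
        simp only [← hρv, map_mul, End.mul_apply]
        rw [hρv y, map_smul, hρv x, smul_smul, mul_comm]) }
  exact ⟨χ.toHomUnits, rfl⟩

variable [FiniteDimensional K V] [IsAlgClosed K]

theorem iSup_weightSpace_eq_top (hρ : ∀ x y, Commute (ρ x) (ρ y))
    (hss : ∀ x, End.IsFinitelySemisimple (ρ x)) : ⨆ χ, weightSpace ρ χ = ⊤ := by
  rw [eq_top_iff, ← End.iSup_iInf_maxGenEigenspace_eq_top_of_iSup_maxGenEigenspace_eq_top_of_commute
    (fun x => ρ x) (fun x y _ => hρ x y) fun x => End.iSup_maxGenEigenspace_eq_top _]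
  simp only [(hss _).maxGenEigenspace_eq_eigenspace]
  refine iSup_le fun μ => ?_
  by_cases hμ : ⨅ x, End.eigenspace (ρ x) (μ x) = ⊥
  · exact hμ ▸ bot_le
  · obtain ⟨χ, hχ⟩ := exists_weightSpace_eq_iInf_eigenspace hμ
    exact hχ ▸ le_iSup (weightSpace ρ) χ

theorem eq_smul_one_of_forall_weight (hρ : ∀ x y, Commute (ρ x) (ρ y))
    (hss : ∀ x, End.IsFinitelySemisimple (ρ x)) {x : H} {c : K}
    (h : ∀ χ, weightSpace ρ χ ≠ ⊥ → (χ x : K) = c) : ρ x = c • 1 := by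
  have htop : ⊤ ≤ End.eigenspace (ρ x) c := by
    rw [← iSup_weightSpace_eq_top hρ hss]
    refine iSup_le fun χ v hv => ?_
    by_cases hχ : weightSpace ρ χ = ⊥
    · exact (Submodule.mem_bot K).1 (hχ ▸ hv) ▸ zero_mem _
    · exact End.mem_eigenspace_iff.2 (h χ hχ ▸ mem_weightSpace.1 hv x)
  ext v
  exact End.mem_eigenspace_iff.1 (htop Submodule.mem_top)

end WeightSpace

namespace IsProjectiveImage

theorem exists_character_of_weights (hπ : IsProjectiveImage ρ π) {χ χ' : H →* Kˣ}
    (hχ : weightSpace ρ χ ≠ ⊥) (hχ' : weightSpace ρ χ' ≠ ⊥) :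
    ∃ f : G →* Kˣ, ∀ x, f (π x) = χ x / χ' x := by
  have hker : π.ker ≤ (χ / χ').ker := fun x hx => by
    obtain ⟨c, hc⟩ := (hπ.eq_one_iff x).1 hx
    refine div_eq_one.2 (Units.ext ?_)
    rw [weight_apply_eq_of_eq_smul_one hχ hc, weight_apply_eq_of_eq_smul_one hχ' hc]
  exact ⟨π.liftOfSurjective hπ.surjective ⟨χ / χ', hker⟩,
    π.liftOfRightInverse_comp_apply _ _ ⟨χ / χ', hker⟩⟩

variable [FiniteDimensional K V] [IsAlgClosed K] [Finite G]

theorem generatedByAtMost_finrank_sub_one [Nontrivial V] (hπ : IsProjectiveImage ρ π)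
    (hρ : ∀ x y, Commute (ρ x) (ρ y)) (hss : ∀ x, End.IsFinitelySemisimple (ρ x)) :
    GeneratedByAtMost G (finrank K V - 1) := by
  classical
  have hind := iSupIndep_weightSpace hρ
  have : Fintype {χ // weightSpace ρ χ ≠ ⊥} :=
    (WellFoundedGT.finite_ne_bot_of_iSupIndep hind).fintype
  have hcard : Fintype.card {χ // weightSpace ρ χ ≠ ⊥} ≤ finrank K V :=
    hind.subtype_ne_bot_le_finrank
  obtain ⟨χ₀⟩ : Nonempty {χ // weightSpace ρ χ ≠ ⊥} := by
    by_contra! hempty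
    have hbot : ⨆ χ, weightSpace ρ χ = ⊥ :=
      iSup_eq_bot.2 fun χ => not_not.1 fun hχ => hempty.false ⟨χ, hχ⟩
    exact bot_ne_top (hbot.symm.trans (iSup_weightSpace_eq_top hρ hss))
  choose f hf using fun χ : {χ // weightSpace ρ χ ≠ ⊥} =>
    hπ.exists_character_of_weights χ.2 χ₀.2
  refine (GeneratedByAtMost.of_characters (Finset.univ.erase χ₀) f fun y hy => ?_).mono ?_
  · obtain ⟨x, rfl⟩ := hπ.surjective y
    refine (hπ.eq_one_iff x).2 ⟨χ₀.1 x, eq_smul_one_of_forall_weight hρ hss fun χ hχ => ?_⟩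
    obtain rfl | hne := eq_or_ne χ χ₀
    · rfl
    · refine congrArg Units.val (div_eq_one.1 ?_)
      rw [← hf ⟨χ, hχ⟩]
      exact hy _ (by simpa [Subtype.ext_iff] using hne)
  · rw [Finset.card_erase_of_mem (Finset.mem_univ _), Finset.card_univ]
    exact Nat.sub_le_sub_right hcard 1

theorem generatedByAtMost_max {p : ℕ} [Fact p.Prime] [NeZero (p : K)] (hG : IsPGroup p G)
    (hV : finrank K V = p) (hπ : IsProjectiveImage ρ π) : GeneratedByAtMost G (max 2 (p - 1)) := by
  by_cases hcenter : ∀ z, π z ∈ center G → ∀ x, Commute (ρ z) (ρ x)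
  · have : Nontrivial V := nontrivial_of_finrank_pos (hV ▸ (Fact.out : p.Prime).pos)
    have hρ := hπ.commute_of_forall_mem_center hG hV hcenter
    refine .mono ?_ (le_max_right _ _)
    exact hV ▸ hπ.generatedByAtMost_finrank_sub_one hρ (hπ.isFinitelySemisimple hG)
  · push Not at hcenter
    obtain ⟨h, hh, g, hgh⟩ := hcenter
    exact (hπ.generatedByAtMost_two_of_not_commute hG hV hh hgh).mono (le_max_left _ _)

end IsProjectiveImage

end ProjectiveRepresentation

section GeneralLinear

theorem matrix_map_mem_range_scalar_iff {n R S : Type*} [Fintype n] [DecidableEq n] [CommRing R]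
    [CommRing S] {f : R →+* S} (hf : Function.Injective f) {M : Matrix n n R} :
    M.map f ∈ Set.range (scalar n) ↔ M ∈ Set.range (scalar n) := by
  simp only [mem_range_scalar_iff_commute_single, commute_iff_eq]
  refine forall₃_congr fun i j _ => ?_
  rw [← (map_injective hf).eq_iff]
  simp

variable (n K L : Type*) [Fintype n] [DecidableEq n] [Field K] [Field L] [Algebra K L]

/-- The natural representation of `GL n K` on `Lⁿ`, for an extension `L` of `K`. Passing to an
algebraically closed `L` provides eigenvalues. -/
def glRepresentation : Representation L (GL n K) (n → L) :=
  (Matrix.toLinAlgEquiv' : Matrix n n L ≃ₐ[L] _).toMonoidHom.comp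
    ((Units.coeHom _).comp (Matrix.GeneralLinearGroup.map (algebraMap K L)))

theorem isProjectiveImage_glRepresentation :
    IsProjectiveImage (glRepresentation n K L) (QuotientGroup.mk' (center (GL n K))) where
  surjective := QuotientGroup.mk'_surjective _
  eq_one_iff M := by
    rw [← MonoidHom.mem_ker, QuotientGroup.ker_mk',
      Matrix.GeneralLinearGroup.mem_center_iff_val_mem_range_scalar,
      ← matrix_map_mem_range_scalar_iff (algebraMap K L).injective]
    refine exists_congr fun c => ?_
    rw [eq_comm, ← toLinAlgEquiv'.injective.eq_iff]
    simp [glRepresentation, ← smul_one_eq_diagonal]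

end GeneralLinear

theorem stmt_6_general {p : ℕ} [Fact p.Prime] {K : Type*} [Field K] [NeZero (p : K)]
    (G : Subgroup (GL (Fin p) K ⧸ Subgroup.center (GL (Fin p) K))) [Finite G]
    (hG : IsPGroup p G) : GeneratedByAtMost G (max 2 (p - 1)) :=
  have : NeZero (p : AlgebraicClosure K) :=
    NeZero.nat_of_injective (algebraMap K (AlgebraicClosure K)).injective
  ((isProjectiveImage_glRepresentation (Fin p) K (AlgebraicClosure K)).subgroupComap
    G).generatedByAtMost_max hG (by simp)

theorem stmt_6 (G : Subgroup (GL (Fin 3) ℂ ⧸ Subgroup.center (GL (Fin 3) ℂ))) [Finite G]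
    (hG : IsPGroup 3 G) : GeneratedByAtMost G 2 :=
  stmt_6_general G hG
end

section
/- Every finite 3-subgroup of GL₃(ℂ) can be generated by 3 elements. -/
open Matrix

/-!
Let `G` be a finite `p`-group acting faithfully on a space `V` of dimension at most `p` over an
algebraically closed field in which `p ≠ 0`. If `G` is abelian, it is diagonalizable, hence embeds
into `dim V` copies of the multiplicative group, and `dim V` elements generate it.

Otherwise choose a noncentral `x` that is central modulo the center with `x ^ p` central, and `g`
with `z = ⁅x, g⁆ ≠ 1`. Since `x g = z g x` and `z` has order `p`, the element `g` moves an
eigenvector of `x` through `p` eigenlines of `x` with distinct eigenvalues, which must span `V`.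
Hence the centralizer `A` of `x` is abelian, and an element that commutes with `x` and `g` is a
scalar. So `G` is generated by `A` and `g`, the power `g ^ p` lies in `A`, and the fixed points of
`g` in `A` form a cyclic group. The norm `1 + g + ⋯ + g ^ (p - 1)` maps the coinvariants of `A`
under `g` to these fixed points, and by triviality of the Herbrand quotient its kernel has order `1`
or `p`, so two elements generate the coinvariants. Together with `g`, they generate the nilpotent
group `G` as a normal subgroup, and therefore as a group.
-/

open Subgroup Module
open scoped IsMulCommutative commutatorElement

section Rank

variable {G H : Type*} [Group G] [Group H]

lemma generatedByAtMost_of_rank_le [Group.FG G] {m : ℕ} (h : Group.rank G ≤ m) :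
    GeneratedByAtMost G m := by
  obtain ⟨S, hcard, hS⟩ := Group.rank_spec G
  exact ⟨S, hcard.trans_le h, hS⟩

lemma rank_le_one_of_isCyclic [Group.FG G] [IsCyclic G] : Group.rank G ≤ 1 := by
  obtain ⟨g, hg⟩ := isCyclic_iff_exists_zpowers_eq_top.mp ‹IsCyclic G›
  refine (Group.rank_le (S := {g}) ?_).trans_eq (Finset.card_singleton g)
  rw [Finset.coe_singleton, ← zpowers_eq_closure, hg]

lemma exists_finset_card_le_rank_map_closure_eq_top [Group.FG H] {f : G →* H}
    (hf : Function.Surjective f) :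
    ∃ S : Finset G, S.card ≤ Group.rank H ∧ (closure (S : Set G)).map f = ⊤ := by
  classical
  obtain ⟨T, hcard, hT⟩ := Group.rank_spec H
  refine ⟨T.image (Function.surjInv hf), Finset.card_image_le.trans_eq hcard, ?_⟩
  rw [MonoidHom.map_closure, Finset.coe_image, Set.image_image]
  simpa only [Function.surjInv_eq, Set.image_id'] using hT

lemma rank_le_rank_ker_add_rank_range [Group.FG G] (f : G →* H) [Group.FG f.ker] :
    Group.rank G ≤ Group.rank f.ker + Group.rank f.range := by
  classical
  obtain ⟨S, hScard, hS⟩ := Group.rank_spec f.ker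
  obtain ⟨T, hTcard, hT⟩ :=
    exists_finset_card_le_rank_map_closure_eq_top f.rangeRestrict_surjective
  let U : Finset G := S.image f.ker.subtype ∪ T
  have hker : f.ker ≤ closure (U : Set G) := by
    rw [← f.ker.range_subtype, MonoidHom.range_eq_map, ← hS, MonoidHom.map_closure]
    exact closure_mono (by simp [U])
  have hmap : (closure (U : Set G)).map f.rangeRestrict = ⊤ :=
    top_le_iff.mp (hT.ge.trans (map_mono (closure_mono (by simp [U]))))
  have hU : closure (U : Set G) = ⊤ := by
    have h := comap_map_eq_self (f := f.rangeRestrict) (f.ker_rangeRestrict.trans_le hker)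
    rwa [hmap, comap_top, eq_comm] at h
  calc
    Group.rank G ≤ U.card := Group.rank_le hU
    _ ≤ (S.image f.ker.subtype).card + T.card := Finset.card_union_le _ _
    _ ≤ Group.rank f.ker + Group.rank f.range := by
      grw [Finset.card_image_le, hScard, hTcard]

lemma rank_le_of_forall_eq_one {R : Type*} [CommRing R] [IsDomain R] {n : ℕ} [Finite G]
    (χ : Fin n → G →* Rˣ) (hχ : ∀ g, (∀ i, χ i g = 1) → g = 1) : Group.rank G ≤ n := by
  induction n generalizing G with
  | zero =>
    have : Subsingleton G := subsingleton_of_forall_eq 1 fun g => hχ g fun i => i.elim0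
    exact (Group.rank_eq_zero G).le
  | succ n ih =>
    have hker : Group.rank (χ 0).ker ≤ n := by
      refine ih (fun i => (χ i.succ).comp (χ 0).ker.subtype) fun g hg => Subtype.ext ?_
      exact hχ g (Fin.cases g.2 hg)
    have : Finite (χ 0).range := Set.finite_range (χ 0)
    calc
      Group.rank G ≤ Group.rank (χ 0).ker + Group.rank (χ 0).range :=
        rank_le_rank_ker_add_rank_range (χ 0)
      _ ≤ n + 1 := add_le_add hker rank_le_one_of_isCyclic

end Rank

section Index

lemma relIndex_range_ker_comm {A : Type*} [Group A] [Finite A] {f g : A →* A}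
    (hfg : f.range ≤ g.ker) (hgf : g.range ≤ f.ker) :
    f.range.relIndex g.ker = g.range.relIndex f.ker := by
  have card_range_mul {u v : A →* A} (h : u.range ≤ v.ker) :
      Nat.card u.range * u.range.relIndex v.ker = Nat.card v.ker := by
    rw [← relIndex_bot_left, ← relIndex_bot_left, relIndex_mul_relIndex _ _ _ bot_le h]
  have card_ker_mul (u : A →* A) : Nat.card u.ker * Nat.card u.range = Nat.card A := by
    rw [← index_ker, card_mul_index]
  have hpos : 0 < Nat.card f.range * Nat.card g.range := Nat.mul_pos Nat.card_pos Nat.card_pos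
  refine Nat.eq_of_mul_eq_mul_left hpos ?_
  calc
    _ = Nat.card g.ker * Nat.card g.range := by rw [← card_range_mul hfg]; ring
    _ = Nat.card f.ker * Nat.card f.range := by rw [card_ker_mul, card_ker_mul]
    _ = _ := by rw [← card_range_mul hgf]; ring

lemma index_dvd_of_forall_pow_mem {G : Type*} [CommGroup G] [IsCyclic G] (H : Subgroup G) {n : ℕ}
    (h : ∀ g, g ^ n ∈ H) : H.index ∣ n := by
  have : IsCyclic (G ⧸ H) :=
    isCyclic_of_surjective (QuotientGroup.mk' H) (QuotientGroup.mk'_surjective H)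
  rw [index_eq_card, ← IsCyclic.exponent_eq_card, Monoid.exponent_dvd_iff_forall_pow_eq_one]
  rintro ⟨g⟩
  exact (QuotientGroup.eq_one_iff _).mpr (h g)

end Index

section Coinvariants

variable {A : Type*} [CommGroup A] (σ : MulAut A)

/-- The endomorphism `σ - 1` of an abelian group with an automorphism `σ`, in multiplicative
notation. Its kernel is the group of fixed points of `σ`, and its cokernel the group of
coinvariants. -/
def coboundary : A →* A := σ.toMonoidHom / MonoidHom.id A

/-- The endomorphism `1 + σ + ⋯ + σ ^ (n - 1)` of an abelian group with an automorphism `σ`, in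
multiplicative notation. It is the norm of the cyclic group generated by `σ` if `σ` has
order `n`. -/
def cyclicNorm (n : ℕ) : A →* A := ∏ i ∈ Finset.range n, (σ ^ i).toMonoidHom

lemma coboundary_apply (a : A) : coboundary σ a = σ a / a := rfl

lemma cyclicNorm_apply (n : ℕ) (a : A) :
    cyclicNorm σ n a = ∏ i ∈ Finset.range n, (σ ^ i) a := by
  simp [cyclicNorm, MonoidHom.finsetProd_apply]

variable {σ}

lemma mem_ker_coboundary {a : A} : a ∈ (coboundary σ).ker ↔ σ a = a := by
  rw [MonoidHom.mem_ker, coboundary_apply, div_eq_one]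

lemma cyclicNorm_eq_pow {n : ℕ} {a : A} (ha : a ∈ (coboundary σ).ker) :
    cyclicNorm σ n a = a ^ n := by
  have hσ (i : ℕ) : (σ ^ i) a = a := by
    induction i with
    | zero => simp
    | succ i ih => rw [pow_succ, MulAut.mul_apply, mem_ker_coboundary.mp ha, ih]
  simp only [cyclicNorm_apply, hσ, Finset.prod_const, Finset.card_range]

lemma range_coboundary_le_ker_cyclicNorm {n : ℕ} (hσ : σ ^ n = 1) :
    (coboundary σ).range ≤ (cyclicNorm σ n).ker := by
  rintro _ ⟨a, rfl⟩
  have htelescope := Finset.prod_range_div (fun i => (σ ^ i) a) n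
  simp only [pow_succ, MulAut.mul_apply, Finset.prod_div_distrib] at htelescope
  simpa only [MonoidHom.mem_ker, cyclicNorm_apply, coboundary_apply, map_div, hσ, pow_zero,
    MulAut.one_apply, div_self'] using htelescope

lemma range_cyclicNorm_le_ker_coboundary {n : ℕ} (hσ : σ ^ n = 1) :
    (cyclicNorm σ n).range ≤ (coboundary σ).ker := by
  rintro _ ⟨a, rfl⟩
  have hcomm : σ (cyclicNorm σ n a) = cyclicNorm σ n (σ a) := by
    simp only [cyclicNorm_apply, map_prod, ← MulAut.mul_apply, ← pow_succ, ← pow_succ']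
  rw [mem_ker_coboundary, hcomm, ← div_eq_one, ← map_div]
  exact range_coboundary_le_ker_cyclicNorm hσ ⟨a, rfl⟩

/-- The quotient of `A` by `(σ - 1) A`, the largest one on which `σ` acts trivially. -/
abbrev Coinvariants (σ : MulAut A) : Type _ := A ⧸ (coboundary σ).range

-- Herbrand's quotient of a finite module is `1`, so `Ĥ⁻¹` is as small as `Ĥ⁰`, a cyclic group
-- killed by `n`.
lemma relIndex_range_coboundary_ker_cyclicNorm_dvd [Finite A] [IsCyclic (coboundary σ).ker] {n : ℕ}
    (hσ : σ ^ n = 1) : (coboundary σ).range.relIndex (cyclicNorm σ n).ker ∣ n := by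
  rw [relIndex_range_ker_comm (range_coboundary_le_ker_cyclicNorm hσ)
    (range_cyclicNorm_le_ker_coboundary hσ)]
  refine index_dvd_of_forall_pow_mem _ fun a => ?_
  exact mem_subgroupOf.mpr ⟨a, cyclicNorm_eq_pow a.2⟩

lemma rank_coinvariants_le_two [Finite A] [IsCyclic (coboundary σ).ker] {p : ℕ} [Fact p.Prime]
    (hσ : σ ^ p = 1) : Group.rank (Coinvariants σ) ≤ 2 := by
  let norm : Coinvariants σ →* A :=
    QuotientGroup.lift _ (cyclicNorm σ p) (range_coboundary_le_ker_cyclicNorm hσ)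
  have hker : IsCyclic norm.ker := by
    refine isCyclic_of_card_dvd_prime (p := p) ?_
    rw [QuotientGroup.ker_lift, ← relIndex_ker, QuotientGroup.ker_mk']
    exact relIndex_range_coboundary_ker_cyclicNorm_dvd hσ
  have hrange : norm.range ≤ (coboundary σ).ker := by
    rintro _ ⟨⟨a⟩, rfl⟩
    exact range_cyclicNorm_le_ker_coboundary hσ ⟨a, rfl⟩
  have : IsCyclic norm.range := isCyclic_of_le hrange
  calc
    Group.rank (Coinvariants σ) ≤ Group.rank norm.ker + Group.rank norm.range :=
      rank_le_rank_ker_add_rank_range norm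
    _ ≤ 1 + 1 := add_le_add rank_le_one_of_isCyclic rank_le_one_of_isCyclic

end Coinvariants

section Nilpotent

variable {G : Type*} [Group G]

lemma closure_eq_top_of_normalClosure_eq_top [Group.IsNilpotent G] [IsCoatomic (Subgroup G)]
    {s : Set G} (hs : normalClosure s = ⊤) : closure s = ⊤ := by
  refine (eq_top_or_exists_le_coatom (closure s)).resolve_right ?_
  rintro ⟨M, hM, hle⟩
  have : M.Normal :=
    NormalizerCondition.normal_of_coatom M Group.normalizerCondition_of_isNilpotent hM
  exact hM.1 (top_le_iff.mp (hs.ge.trans (normalClosure_le_normal (closure_le M |>.mp hle))))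

variable {A : Subgroup G} [A.Normal] [IsMulCommutative A] {g : G}

lemma coe_coboundary_conjNormal (a : A) :
    (coboundary (MulAut.conjNormal g : MulAut A) a : G) = ⁅g, (a : G)⁆ := by
  rw [coboundary_apply, div_eq_mul_inv, coe_mul, MulAut.conjNormal_apply, coe_inv,
    commutatorElement_def]

lemma rank_le_rank_coinvariants_add_one [Finite G] [Group.IsNilpotent G]
    (hgen : A ⊔ zpowers g = ⊤) :
    Group.rank G ≤ Group.rank (Coinvariants (MulAut.conjNormal g : MulAut A)) + 1 := by
  classical
  let σ : MulAut A := MulAut.conjNormal g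
  obtain ⟨T, hTcard, hT⟩ := exists_finset_card_le_rank_map_closure_eq_top
    (QuotientGroup.mk'_surjective (coboundary σ).range)
  let S : Finset G := insert g (T.image A.subtype)
  let N : Subgroup G := normalClosure (S : Set G)
  have hSN : (S : Set G) ⊆ N := subset_normalClosure
  have hgN : g ∈ N := hSN (by simp [S])
  have hrange : (coboundary σ).range ≤ N.subgroupOf A := by
    rintro _ ⟨a, rfl⟩
    rw [mem_subgroupOf, coe_coboundary_conjNormal, commutatorElement_def, mul_assoc, mul_assoc]
    exact mul_mem hgN (by simpa only [mul_assoc] using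
      normalClosure_normal.conj_mem _ (inv_mem hgN) (a : G))
  have hTN : closure (T : Set A) ≤ N.subgroupOf A :=
    (closure_le _).mpr fun t ht => hSN (by simp_all [S])
  have hAN : A ≤ N := by
    have h := comap_map_eq_self ((QuotientGroup.ker_mk' _).trans_le hrange)
    rwa [top_le_iff.mp (hT.ge.trans (map_mono hTN)), comap_top, eq_comm, subgroupOf_eq_top] at h
  have hN : N = ⊤ :=
    top_le_iff.mp (hgen.ge.trans (sup_le hAN (zpowers_le.mpr hgN)))
  calc
    Group.rank G ≤ S.card := Group.rank_le (closure_eq_top_of_normalClosure_eq_top hN)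
    _ ≤ T.card + 1 := by grw [Finset.card_insert_le, Finset.card_image_le]
    _ ≤ _ := by grw [hTcard]

lemma rank_le_three_of_isMulCommutative_normal [Finite G] [Group.IsNilpotent G] {p : ℕ}
    [Fact p.Prime] (hgen : A ⊔ zpowers g = ⊤) (hg : g ^ p ∈ A)
    [IsCyclic ((centralizer {g}).subgroupOf A)] : Group.rank G ≤ 3 := by
  let σ : MulAut A := MulAut.conjNormal g
  have hσ : σ ^ p = 1 := by
    ext a
    rw [← map_pow, MulAut.conjNormal_apply, MulAut.one_apply, mul_inv_eq_iff_eq_mul]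
    exact congrArg Subtype.val (mul_comm (⟨g ^ p, hg⟩ : A) a)
  have hker : (coboundary σ).ker = (centralizer {g}).subgroupOf A := by
    ext a
    rw [MonoidHom.mem_ker, ← OneMemClass.coe_eq_one, coe_coboundary_conjNormal,
      commutatorElement_eq_one_iff_mul_comm, mem_subgroupOf, mem_centralizer_singleton_iff, eq_comm]
  have : IsCyclic (coboundary σ).ker := hker ▸ ‹_›
  grw [rank_le_rank_coinvariants_add_one hgen, rank_coinvariants_le_two hσ]

end Nilpotent

section Commutator

variable {G : Type*} [Group G] {x : G}

lemma commutatorElement_pow_left {g : G} (hg : ⁅x, g⁆ ∈ center G) (n : ℕ) :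
    ⁅x ^ n, g⁆ = ⁅x, g⁆ ^ n := by
  induction n with
  | zero => simp
  | succ n ih =>
    rw [pow_succ, commutatorElement_mul_left_eq_conj_mul, ih, mem_center_iff.mp hg,
      mul_inv_cancel_right, ← pow_succ']

/-- The homomorphism `g ↦ ⁅x, g⁆` for an element `x` that is central modulo the center. -/
@[simps]
def commutatorHom (x : G) (hx : ∀ g, ⁅x, g⁆ ∈ center G) : G →* center G where
  toFun g := ⟨⁅x, g⁆, hx g⟩
  map_one' := Subtype.ext (commutatorElement_one_right x)
  map_mul' g h := Subtype.ext <| by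
    calc
      ⁅x, g * h⁆ = ⁅x, g⁆ * (g * ⁅x, h⁆ * g⁻¹) := by
        rw [commutatorElement_mul_right_eq_mul_conj, mul_assoc, mul_assoc, mul_assoc]
      _ = ⁅x, g⁆ * ⁅x, h⁆ := by rw [mem_center_iff.mp (hx h), mul_inv_cancel_right]

lemma ker_commutatorHom (hx : ∀ g, ⁅x, g⁆ ∈ center G) :
    (commutatorHom x hx).ker = centralizer {x} := by
  ext g
  rw [MonoidHom.mem_ker, ← OneMemClass.coe_eq_one, commutatorHom_apply_coe,
    commutatorElement_eq_one_iff_mul_comm, mem_centralizer_singleton_iff, eq_comm]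

end Commutator

section PGroup

variable {G H : Type*} [Group G] [Group H]

lemma ker_sup_zpowers_eq_top {f : G →* H} {g : G} (h : f.range ≤ zpowers (f g)) :
    f.ker ⊔ zpowers g = ⊤ := by
  refine eq_top_iff.mpr fun k _ => ?_
  obtain ⟨i, hi⟩ := mem_zpowers_iff.mp (h ⟨k, rfl⟩)
  rw [← mul_inv_cancel_right k (g ^ i)⁻¹, inv_inv]
  refine mul_mem_sup ?_ (zpow_mem_zpowers g i)
  rw [MonoidHom.mem_ker, map_mul, map_inv, map_zpow, hi, mul_inv_cancel]

variable [Finite G] {p : ℕ} [Fact p.Prime]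

lemma exists_orderOf_center_eq_prime [Nontrivial G] (hG : IsPGroup p G) :
    ∃ x : center G, orderOf x = p := by
  have := hG.center_nontrivial
  refine exists_prime_orderOf_dvd_card' p ?_
  exact (hG.to_subgroup (center G)).card_eq_or_dvd.resolve_left Finite.one_lt_card.ne'

lemma exists_notMem_center_pow_mem_center (hG : IsPGroup p G) (hcomm : ¬ IsMulCommutative G) :
    ∃ x ∉ center G, x ^ p ∈ center G ∧ ∀ g, ⁅x, g⁆ ∈ center G := by
  have : Nontrivial (G ⧸ center G) := by
    rwa [QuotientGroup.nontrivial_iff, Ne, center_eq_top_iff]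
  obtain ⟨q, hq⟩ := exists_orderOf_center_eq_prime (hG.to_quotient (center G))
  obtain ⟨x, hx⟩ := QuotientGroup.mk_surjective (q : G ⧸ center G)
  refine ⟨x, fun h => ?_, ?_, fun g => ?_⟩
  · rw [← QuotientGroup.eq_one_iff, hx, OneMemClass.coe_eq_one, ← orderOf_eq_one_iff, hq] at h
    exact (Fact.out : p.Prime).ne_one h
  · rw [← QuotientGroup.eq_one_iff, QuotientGroup.mk_pow, hx, ← coe_pow, ← hq, pow_orderOf_eq_one,
      coe_one]
  · rw [← QuotientGroup.eq_one_iff, ← QuotientGroup.mk'_apply, map_commutatorElement,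
      commutatorElement_eq_one_iff_mul_comm, QuotientGroup.mk'_apply, hx]
    exact (mem_center_iff.mp q.2 _).symm

end PGroup

section Diagonalization

variable {K V : Type*} [Field K] [AddCommGroup V] [Module K V]

lemma isSemisimple_of_pow_eq_one {f : End K V} {n : ℕ} (hn : (n : K) ≠ 0) (hf : f ^ n = 1) :
    f.IsSemisimple :=
  End.isSemisimple_of_squarefree_aeval_eq_zero (p := Polynomial.X ^ n - Polynomial.C 1)
    (Polynomial.separable_X_pow_sub_C 1 hn one_ne_zero).squarefree (by simp [hf])

lemma exists_basis_apply_eq_smul_of_isSemisimple [IsAlgClosed K] [FiniteDimensional K V]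
    {ι : Type*} {f : ι → End K V} (hcomm : Pairwise fun i j => Commute (f i) (f j))
    (hf : ∀ i, (f i).IsSemisimple) :
    ∃ (b : Basis (Fin (finrank K V)) K V) (χ : Fin (finrank K V) → ι → K),
      ∀ i j, f i (b j) = χ j i • b j := by
  have htop := End.iSup_iInf_maxGenEigenspace_eq_top_of_iSup_maxGenEigenspace_eq_top_of_commute f
    hcomm (fun i => End.iSup_maxGenEigenspace_eq_top (f i))
  simp only [(hf _).isFinitelySemisimple.maxGenEigenspace_eq_eigenspace] at htop
  let s : Set V := {v | ∃ χ : ι → K, ∀ i, f i v = χ i • v}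
  have hs : ⊤ ≤ Submodule.span K s := by
    rw [← htop]
    refine iSup_le fun χ v hv => Submodule.subset_span ⟨χ, fun i => ?_⟩
    exact End.mem_eigenspace_iff.mp ((Submodule.mem_iInf _).mp hv i)
  let b := Basis.ofSpan hs
  have hb (j) : b j ∈ s := Basis.ofSpan_subset hs ⟨j, rfl⟩
  have := FiniteDimensional.fintypeBasisIndex b
  let e := Fintype.equivFinOfCardEq (finrank_eq_card_basis b).symm
  choose χ hχ using fun j => hb (e.symm j)
  exact ⟨b.reindex e, χ, fun i j => by simpa only [Basis.reindex_apply] using hχ j i⟩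

lemma exists_hasEigenvector_ne_one_of_commute [IsAlgClosed K] [FiniteDimensional K V]
    {Z T : End K V} (hZT : Commute Z T) (hZ : Z.IsSemisimple) (hT : T.IsSemisimple) (hne : Z ≠ 1) :
    ∃ ζ l v, ζ ≠ 1 ∧ Z.HasEigenvector ζ v ∧ T.HasEigenvector l v := by
  obtain ⟨b, χ, hχ⟩ := exists_basis_apply_eq_smul_of_isSemisimple (f := ![Z, T])
    (by simp [Pairwise, Fin.forall_fin_two, hZT, hZT.symm]) (by simp [Fin.forall_fin_two, hZ, hT])
  obtain ⟨j, hj⟩ : ∃ j, χ j 0 ≠ 1 := by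
    by_contra! hone
    exact hne (b.ext fun j => by simpa [hone] using hχ 0 j)
  exact ⟨χ j 0, χ j 1, b j, hj, End.hasEigenvector_iff.mpr ⟨End.mem_eigenspace_iff.mpr (hχ 0 j),
    b.ne_zero j⟩, End.hasEigenvector_iff.mpr ⟨End.mem_eigenspace_iff.mpr (hχ 1 j), b.ne_zero j⟩⟩

lemma exists_apply_eq_smul_of_commute_s7 {ι : Type*} {b : Basis ι K V} {T R : End K V}
    {c : ι → K} (hc : Function.Injective c) (hT : ∀ i, T (b i) = c i • b i) (hTR : Commute T R)
    (i : ι) : ∃ d : K, R (b i) = d • b i := by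
  have hrepr (v : V) (j : ι) : b.repr (T v) j = c j * b.repr v j := by
    have : b.coord j ∘ₗ T = c j • b.coord j := b.ext fun k => by
      by_cases hkj : k = j <;> simp [hT, hkj]
    exact LinearMap.congr_fun this v
  refine ⟨b.repr (R (b i)) i, b.repr.injective (Finsupp.ext fun j => ?_)⟩
  rcases eq_or_ne i j with rfl | hij
  · simp
  have heig : c j * b.repr (R (b i)) j = c i * b.repr (R (b i)) j := by
    have h : T (R (b i)) = R (T (b i)) := LinearMap.congr_fun hTR.eq (b i)
    rw [← hrepr, h, hT, map_smul, map_smul, Finsupp.smul_apply, smul_eq_mul]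
  have hzero : b.repr (R (b i)) j = 0 :=
    (mul_eq_mul_right_iff.mp heig).resolve_left fun h => hij (hc h).symm
  simp [hzero, hij]

end Diagonalization

section ClockShift

variable {K V : Type*} [Field K] [AddCommGroup V] [Module K V] {T S R R' Z : End K V} {n : ℕ}

/-- In the basis `b`, the endomorphism `T` is diagonal with the pairwise distinct eigenvalues `c i`,
and `S` maps each vector of `b` but the last one to the next one, as for the clock and shift
matrices. -/
structure IsClockShiftBasis [NeZero n] (T S : End K V) (b : Basis (Fin n) K V) (c : Fin n → K) :
    Prop where
  injective : Function.Injective c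
  clock : ∀ i, T (b i) = c i • b i
  shift : ∀ i, b i = (S ^ (i : ℕ)) (b 0)

namespace IsClockShiftBasis

variable [NeZero n] {b : Basis (Fin n) K V} {c : Fin n → K}

lemma commute_of_commute (h : IsClockShiftBasis T S b c) (hR : Commute T R) (hR' : Commute T R') :
    Commute R R' := by
  refine b.ext fun i => ?_
  obtain ⟨d, hd⟩ := exists_apply_eq_smul_of_commute_s7 h.injective h.clock hR i
  obtain ⟨d', hd'⟩ := exists_apply_eq_smul_of_commute_s7 h.injective h.clock hR' i
  simp only [End.mul_apply, hd, hd', map_smul, smul_smul, mul_comm]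

lemma eq_algebraMap_of_apply_zero (h : IsClockShiftBasis T S b c) (hR : Commute S R) {d : K}
    (hd : R (b 0) = d • b 0) : R = algebraMap K (End K V) d := by
  refine b.ext fun i => ?_
  calc
    R (b i) = (S ^ (i : ℕ)) (R (b 0)) := by
      rw [h.shift, ← End.mul_apply, ← End.mul_apply, (hR.pow_left i).eq]
    _ = d • b i := by rw [hd, map_smul, ← h.shift]

lemma exists_eq_algebraMap (h : IsClockShiftBasis T S b c) (hT : Commute T R) (hS : Commute S R) :
    ∃ d : K, R = algebraMap K (End K V) d :=
  (exists_apply_eq_smul_of_commute_s7 h.injective h.clock hT 0).imp fun _ =>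
    h.eq_algebraMap_of_apply_zero hS

end IsClockShiftBasis

variable {ζ l : K} {v : V}

lemma hasEigenvector_pow_apply (hTS : T * S = Z * S * T) (hSZ : Commute S Z)
    (hS : Function.Injective S) (hZ : Z v = ζ • v) (hT : T.HasEigenvector l v) (i : ℕ) :
    T.HasEigenvector (ζ ^ i * l) ((S ^ i) v) := by
  induction i with
  | zero => simpa using hT
  | succ i ih =>
    have hZi : Z ((S ^ (i + 1)) v) = ζ • (S ^ (i + 1)) v := by
      rw [← End.mul_apply, ← (hSZ.pow_left (i + 1)).eq, End.mul_apply, hZ, map_smul]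
    rw [pow_succ' S, End.mul_apply] at hZi ⊢
    refine ⟨End.mem_eigenspace_iff.mpr ?_, (map_ne_zero_iff S hS).mpr ih.2⟩
    calc
      T (S ((S ^ i) v)) = Z (S (T ((S ^ i) v))) := LinearMap.congr_fun hTS _
      _ = (ζ ^ (i + 1) * l) • S ((S ^ i) v) := by
        rw [ih.apply_eq_smul, map_smul, map_smul, hZi, smul_smul, pow_succ, mul_right_comm]

lemma exists_isClockShiftBasis [NeZero n] [FiniteDimensional K V] (hV : finrank K V ≤ n)
    (hTS : T * S = Z * S * T) (hSZ : Commute S Z) (hS : Function.Injective S)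
    (hζ : IsPrimitiveRoot ζ n) (hl : l ≠ 0) (hZ : Z v = ζ • v) (hT : T.HasEigenvector l v) :
    ∃ (b : Basis (Fin n) K V) (c : Fin n → K), IsClockShiftBasis T S b c ∧ b 0 = v := by
  let c (i : Fin n) : K := ζ ^ (i : ℕ) * l
  have hc : Function.Injective c := fun i j hij =>
    Fin.ext (hζ.pow_inj i.2 j.2 (mul_right_cancel₀ hl hij))
  have heig (i : Fin n) := hasEigenvector_pow_apply hTS hSZ hS hZ hT i
  have hind := End.eigenvectors_linearIndependent' T c hc _ heig
  let b := basisOfLinearIndependentOfCardEqFinrank hind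
    (hind.fintype_card_le_finrank.antisymm (by rwa [Fintype.card_fin]))
  have hb (i) : b i = (S ^ (i : ℕ)) v := by simp [b]
  have hb0 : b 0 = v := by simp [hb]
  exact ⟨b, c, ⟨hc, fun i => by rw [hb, (heig i).apply_eq_smul], fun i => by rw [hb0, hb]⟩, hb0⟩

end ClockShift

section Representation

variable {K V G : Type*} [Field K] [AddCommGroup V] [Module K V] [Group G]
  {ρ : Representation K G V}

lemma exists_character_of_forall_apply_eq_smul {v : V} (hv : v ≠ 0)
    (h : ∀ g, ∃ d : K, ρ g v = d • v) : ∃ χ : G →* Kˣ, ∀ g, ρ g v = (χ g : K) • v := by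
  choose d hd using h
  have hinj : Function.Injective fun a : K => a • v := smul_left_injective K hv
  let χ : G →* K :=
    { toFun := d
      map_one' := hinj (by simp [← hd])
      map_mul' := fun g g' => hinj (by
        beta_reduce
        rw [← hd, map_mul, End.mul_apply, hd g', map_smul, hd g, smul_smul, mul_comm]) }
  exact ⟨χ.toHomUnits, hd⟩

lemma isCyclic_of_forall_eq_algebraMap [Finite G] [Nontrivial V] (hρ : Function.Injective ρ)
    (h : ∀ g, ∃ d : K, ρ g = algebraMap K (End K V) d) : IsCyclic G := by
  obtain ⟨v, hv⟩ := exists_ne (0 : V)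
  obtain ⟨χ, hχ⟩ := exists_character_of_forall_apply_eq_smul hv fun g =>
    (h g).imp fun d hd => by rw [hd, algebraMap_end_apply]
  have hscalar (g : G) : ρ g = algebraMap K (End K V) (χ g) := by
    obtain ⟨d, hd⟩ := h g
    have hdv : d • v = (χ g : K) • v := by rw [← hχ, hd, algebraMap_end_apply]
    rw [hd, smul_left_injective K hv hdv]
  refine isCyclic_of_injective_ringHom ((Units.coeHom K).comp χ) fun a b hab => hρ ?_
  rw [hscalar, hscalar]
  exact congrArg _ hab

section Centralizer

variable {x g : G} {n : ℕ} [NeZero n] {b : Basis (Fin n) K V} {c : Fin n → K}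

lemma IsClockShiftBasis.isMulCommutative_centralizer
    (h : IsClockShiftBasis (ρ x) (ρ g) b c) (hρ : Function.Injective ρ) :
    IsMulCommutative (centralizer {x}) := by
  have hcomm {a : G} (ha : a ∈ centralizer {x}) : Commute (ρ x) (ρ a) :=
    Commute.map (mem_centralizer_singleton_iff.mp ha).symm ρ
  refine ⟨⟨fun a a' => Subtype.ext (hρ ?_)⟩⟩
  simpa only [coe_mul, map_mul] using (h.commute_of_commute (hcomm a.2) (hcomm a'.2)).eq

lemma IsClockShiftBasis.isCyclic_subgroupOf_centralizer [Finite G]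
    (h : IsClockShiftBasis (ρ x) (ρ g) b c) (hρ : Function.Injective ρ) :
    IsCyclic ((centralizer {g}).subgroupOf (centralizer {x})) := by
  have : Nontrivial V := ⟨b 0, 0, b.ne_zero 0⟩
  let ι := (centralizer {x}).subtype.comp ((centralizer {g}).subgroupOf (centralizer {x})).subtype
  have hι : Function.Injective ι := (subtype_injective _).comp (subtype_injective _)
  refine isCyclic_of_forall_eq_algebraMap (ρ := ρ.comp ι) (hρ.comp hι) fun a => ?_
  exact h.exists_eq_algebraMap (Commute.map (mem_centralizer_singleton_iff.mp a.1.2).symm ρ)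
    (Commute.map (mem_centralizer_singleton_iff.mp (mem_subgroupOf.mp a.2)).symm ρ)

lemma IsClockShiftBasis.mem_zpowers_of_mem_center
    (h : IsClockShiftBasis (ρ x) (ρ g) b c) (hρ : Function.Injective ρ) {ζ : K}
    (hζ : IsPrimitiveRoot ζ n) {z w : G} (hz : ρ z = algebraMap K (End K V) ζ)
    (hw : w ∈ center G) (hwn : w ^ n = 1) : w ∈ zpowers z := by
  have : Nontrivial V := ⟨b 0, 0, b.ne_zero 0⟩
  have hcomm (a : G) : Commute (ρ a) (ρ w) := Commute.map (mem_center_iff.mp hw a) ρ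
  obtain ⟨d, hd⟩ := h.exists_eq_algebraMap (hcomm x) (hcomm g)
  have hdn : d ^ n = 1 := (algebraMap K (End K V)).injective (by
    rw [map_pow, ← hd, ← map_pow, hwn, map_one, map_one])
  obtain ⟨i, -, rfl⟩ := hζ.eq_pow_of_pow_eq_one hdn
  have hzw : z ^ i = w := hρ (by rw [hd, map_pow, hz, map_pow])
  exact hzw ▸ npow_mem_zpowers z i

end Centralizer

lemma isSemisimple_apply [NeZero (Nat.card G : K)] (ρ : Representation K G V) (g : G) :
    End.IsSemisimple (ρ g) :=
  isSemisimple_of_pow_eq_one (NeZero.ne (Nat.card G : K)) (by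
    rw [← map_pow, pow_card_eq_one', map_one])

variable [FiniteDimensional K V] [IsAlgClosed K] [NeZero (Nat.card G : K)]

lemma exists_isClockShiftBasis_of_commutatorElement_mem_center {p : ℕ} [Fact p.Prime]
    (hρ : Function.Injective ρ) (hV : finrank K V ≤ p) {x g : G} (hz : ⁅x, g⁆ ∈ center G)
    (hzp : ⁅x, g⁆ ^ p = 1) (hne : ⁅x, g⁆ ≠ 1) :
    ∃ (b : Basis (Fin p) K V) (c : Fin p → K) (ζ : K), IsClockShiftBasis (ρ x) (ρ g) b c ∧
      IsPrimitiveRoot ζ p ∧ ρ ⁅x, g⁆ = algebraMap K (End K V) ζ := by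
  have hcomm (a : G) : Commute (ρ a) (ρ ⁅x, g⁆) := Commute.map (mem_center_iff.mp hz a) ρ
  obtain ⟨ζ, l, v, hζ1, hζv, hlv⟩ := exists_hasEigenvector_ne_one_of_commute (hcomm x).symm
    (isSemisimple_apply ρ _) (isSemisimple_apply ρ x) ((map_ne_one_iff ρ hρ).mpr hne)
  have hζp : ζ ^ p = 1 := smul_left_injective K hζv.2 (by
    simp only [← hζv.pow_apply, ← map_pow, hzp, map_one, End.one_apply, one_smul])
  have hζ : IsPrimitiveRoot ζ p := orderOf_eq_prime hζp hζ1 ▸ IsPrimitiveRoot.orderOf ζ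
  have hinj (a : G) : Function.Injective (ρ a) := (ρ.apply_bijective a).injective
  have hl : l ≠ 0 := by
    rintro rfl
    exact (map_ne_zero_iff _ (hinj x)).mpr hlv.2 (by rw [hlv.apply_eq_smul, zero_smul])
  have hxg : ρ x * ρ g = ρ ⁅x, g⁆ * ρ g * ρ x := by
    rw [← map_mul, ← map_mul, ← map_mul, commutatorElement_def, inv_mul_cancel_right,
      inv_mul_cancel_right]
  obtain ⟨b, c, hbc, rfl⟩ := exists_isClockShiftBasis hV hxg (hcomm g) (hinj g) hζ hl
    hζv.apply_eq_smul hlv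
  exact ⟨b, c, ζ, hbc, hζ, hbc.eq_algebraMap_of_apply_zero (hcomm g) hζv.apply_eq_smul⟩

variable [Finite G]

lemma rank_le_finrank_of_isMulCommutative [IsMulCommutative G] (hρ : Function.Injective ρ) :
    Group.rank G ≤ finrank K V := by
  obtain ⟨b, c, hc⟩ := exists_basis_apply_eq_smul_of_isSemisimple (f := ρ)
    (fun g h _ => Commute.map (mul_comm' g h) ρ) (isSemisimple_apply ρ)
  choose χ hχ using fun j =>
    exists_character_of_forall_apply_eq_smul (b.ne_zero j) fun g => ⟨c j g, hc g j⟩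
  refine rank_le_of_forall_eq_one χ fun g hg => hρ (b.ext fun j => ?_)
  rw [hχ, hg, Units.val_one, one_smul, map_one, End.one_apply]

lemma rank_le_three_of_not_isMulCommutative {p : ℕ} [Fact p.Prime] (hG : IsPGroup p G)
    (hρ : Function.Injective ρ) (hV : finrank K V ≤ p) (hcomm : ¬ IsMulCommutative G) :
    Group.rank G ≤ 3 := by
  have := hG.isNilpotent
  obtain ⟨x, hx, hxp, hxc⟩ := exists_notMem_center_pow_mem_center hG hcomm
  have hpow (g : G) : ⁅x, g⁆ ^ p = 1 := by
    rw [← commutatorElement_pow_left (hxc g), commutatorElement_eq_one_iff_mul_comm,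
      mem_center_iff.mp hxp]
  obtain ⟨g, hg⟩ : ∃ g : G, ⁅x, g⁆ ≠ 1 := by
    by_contra! h
    exact hx (mem_center_iff.mpr fun g => (commutatorElement_eq_one_iff_mul_comm.mp (h g)).symm)
  obtain ⟨b, c, ζ, hbc, hζ, hxg⟩ :=
    exists_isClockShiftBasis_of_commutatorElement_mem_center hρ hV (hxc g) (hpow g) hg
  let f := commutatorHom x hxc
  have hker : f.ker = centralizer {x} := ker_commutatorHom hxc
  have : f.ker.Normal := f.normal_ker
  have : IsMulCommutative f.ker :=
    hker ▸ hbc.isMulCommutative_centralizer hρ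
  have : IsCyclic ((centralizer {g}).subgroupOf f.ker) :=
    hker ▸ hbc.isCyclic_subgroupOf_centralizer hρ
  have hrange : f.range ≤ zpowers (f g) := by
    rintro _ ⟨h, rfl⟩
    have := hbc.mem_zpowers_of_mem_center hρ hζ hxg (hxc h) (hpow h)
    obtain ⟨i, hi⟩ := mem_zpowers_iff.mp this
    exact ⟨i, Subtype.ext hi⟩
  have hgp : g ^ p ∈ f.ker := by
    rw [MonoidHom.mem_ker, map_pow]
    exact Subtype.ext (hpow g)
  exact rank_le_three_of_isMulCommutative_normal (ker_sup_zpowers_eq_top hrange) hgp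

lemma rank_le_max_finrank_three {p : ℕ} [Fact p.Prime] (hG : IsPGroup p G)
    (hρ : Function.Injective ρ) (hV : finrank K V ≤ p) :
    Group.rank G ≤ max (finrank K V) 3 := by
  by_cases hcomm : IsMulCommutative G
  · exact le_max_of_le_left (rank_le_finrank_of_isMulCommutative hρ)
  · exact le_max_of_le_right (rank_le_three_of_not_isMulCommutative hG hρ hV hcomm)

end Representation

lemma natCast_card_ne_zero_of_isPGroup {R G : Type*} [Semiring R] [NoZeroDivisors R] [Nontrivial R]
    [Group G] [Finite G] {p : ℕ} [Fact p.Prime] (hp : (p : R) ≠ 0) (hG : IsPGroup p G) :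
    (Nat.card G : R) ≠ 0 := by
  obtain ⟨k, hk⟩ := IsPGroup.iff_card.mp hG
  rw [hk, Nat.cast_pow]
  exact pow_ne_zero k hp

theorem stmt_7_general {R : Type*} [CommRing R] [IsDomain R] {p n : ℕ} [Fact p.Prime]
    (hp : (p : R) ≠ 0) (hn : n ≤ p) (G : Subgroup (GL (Fin n) R)) [Finite G]
    (hG : IsPGroup p G) : GeneratedByAtMost G (max n 3) := by
  let K := AlgebraicClosure (FractionRing R)
  let i : R →+* K := (algebraMap (FractionRing R) K).comp (algebraMap R (FractionRing R))
  have hi : Function.Injective i :=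
    (algebraMap (FractionRing R) K).injective.comp (IsFractionRing.injective R (FractionRing R))
  have : NeZero (Nat.card G : K) := ⟨natCast_card_ne_zero_of_isPGroup
    (by rwa [← map_natCast i, map_ne_zero_iff i hi]) hG⟩
  let ρ : Representation K G (Fin n → K) :=
    ((toLinAlgEquiv' (R := K) (n := Fin n) : _ →* _).comp i.mapMatrix.toMonoidHom).comp
      ((Units.coeHom _).comp G.subtype)
  have hρ : Function.Injective ρ := (toLinAlgEquiv'.injective.comp (map_injective hi)).comp
    (Units.val_injective.comp G.subtype_injective)
  have hrank := rank_le_max_finrank_three hG hρ (by rwa [finrank_fin_fun])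
  exact generatedByAtMost_of_rank_le (by rwa [finrank_fin_fun] at hrank)

theorem stmt_7 (G : Subgroup (GL (Fin 3) ℂ)) [Finite G]
    (hG : IsPGroup 3 G) : GeneratedByAtMost G 3 := by
  have := Fact.mk Nat.prime_three
  exact stmt_7_general (p := 3) (by norm_num) le_rfl G hG
end
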